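/- There exists a constant C > 0 such that for i = 1,2 and every x = (x₁,x₂,a) ∈ G with r(x) ≥ 1, one has sup_{t>0} |X_i p_t(x)| ≤ C |x| / (a · r(x)² · cosh² r(x)). -/

import Mathlib

open MeasureTheory Real Filter Set
open scoped ENNReal

noncomputable section

/-- The group `G = ℝ² ⋊ ℝ⁺`, realized as triples `(x₁, x₂, a)` (only `a > 0` is relevant). -/
abbrev G : Type := ℝ × ℝ × ℝ

/-- Group product `(x₁,x₂,a)·(x₁',x₂',a') = (x₁+a x₁', x₂+a x₂', a a')`. -/
def gMul (x y : G) : G := (x.1 + x.2.2 * y.1, x.2.1 + x.2.2 * y.2.1, x.2.2 * y.2.2)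

/-- Group inverse `(x₁,x₂,a)⁻¹ = (−x₁/a, −x₂/a, 1/a)`. -/
def gInv (x : G) : G := (-x.1 / x.2.2, -x.2.1 / x.2.2, 1 / x.2.2)

/-- The identity `e = (0,0,1)`. -/
def gE : G := (0, 0, 1)

/-- The right Haar measure `dρ = a⁻¹ dx₁ dx₂ da` (supported where `a > 0`). -/
def ρG : Measure G :=
  (volume : Measure G).withDensity fun x => ENNReal.ofReal (if 0 < x.2.2 then x.2.2⁻¹ else 0)

/-- The modular function `δ(x₁,x₂,a) = a⁻²`. -/
def deltaG (x : G) : ℝ := (x.2.2 ^ 2)⁻¹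

/-- `|x| = √(x₁² + x₂²)`. -/
def normG (x : G) : ℝ := Real.sqrt (x.1 ^ 2 + x.2.1 ^ 2)

/-- `cosh r(x) = (a + a⁻¹ + a⁻¹|x|²)/2`. -/
def coshArg (x : G) : ℝ := (x.2.2 + x.2.2⁻¹ + x.2.2⁻¹ * (x.1 ^ 2 + x.2.1 ^ 2)) / 2

/-- `r(x) ≥ 0` is determined by `cosh r(x) = coshArg x`; explicitly `r = arcosh (coshArg x)`. -/
def rG (x : G) : ℝ := Real.log (coshArg x + Real.sqrt (coshArg x ^ 2 - 1))

/-- The left-invariant distance `d(x,y) = r(x⁻¹y)`. -/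
def dG (x y : G) : ℝ := rG (gMul (gInv x) y)

/-- The heat kernel
`p_t(x) = (8π^{3/2})⁻¹ δ(x)^{1/2} (r(x)/sinh r(x)) t^{−3/2} exp(−r(x)²/(4t))`,
with `r/sinh r := 1` at `x = e`. -/
def heatK (t : ℝ) (x : G) : ℝ :=
  (8 * Real.pi ^ ((3 : ℝ)/2))⁻¹ * Real.sqrt (deltaG x) *
    (if rG x = 0 then 1 else rG x / Real.sinh (rG x)) *
    t ^ (-(3 : ℝ)/2) * Real.exp (-(rG x ^ 2) / (4 * t))

/-- Convolution `f ∗ p_t(x) = ∫ f(xy⁻¹) p_t(y) dρ(y)`. -/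
def convHeat (f : G → ℝ) (t : ℝ) (x : G) : ℝ := ∫ y, f (gMul x (gInv y)) * heatK t y ∂ρG

/-- The heat maximal operator `Mf(x) = sup_{t>0} |f ∗ p_t(x)|` (valued in `ℝ≥0∞`). -/
def maxHeat (f : G → ℝ) (x : G) : ℝ≥0∞ :=
  ⨆ (t : ℝ) (_ : 0 < t), ENNReal.ofReal |convHeat f t x|

/-- Calderón–Zygmund sets. -/
def IsCZ (R : Set G) : Prop :=
  ∃ c : G, ∃ L r : ℝ, 0 < c.2.2 ∧ 0 < L ∧ 0 < r ∧
    R = Set.Icc (c.1 - L/2) (c.1 + L/2) ×ˢ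
        (Set.Icc (c.2.1 - L/2) (c.2.1 + L/2) ×ˢ
         Set.Icc (c.2.2 * Real.exp (-r)) (c.2.2 * Real.exp r)) ∧
    (r < 1 → Real.exp 2 * c.2.2 * r ≤ L ∧ L < Real.exp 8 * c.2.2 * r) ∧
    (1 ≤ r → c.2.2 * Real.exp (2*r) ≤ L ∧ L < c.2.2 * Real.exp (8*r))

/-- Atoms: `A ∈ L¹(ρ)` supported in a Calderón–Zygmund set `R`, with
`‖A‖_∞ ≤ ρ(R)⁻¹` and `∫ A dρ = 0`. -/
def IsAtomG (A : G → ℝ) : Prop :=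
  Integrable A ρG ∧
  ∃ R : Set G, IsCZ R ∧ (∀ x ∉ R, A x = 0) ∧
    eLpNorm A ⊤ ρG ≤ (ρG R)⁻¹ ∧
    ∫ x, A x ∂ρG = 0

/-- `f = Σ_j lam_j A_j` with atoms `A_j`, `Σ_j |lam_j| < ∞`, converging in `L¹(ρ)`. -/
def IsH1Decomp (f : G → ℝ) (lam : ℕ → ℝ) (A : ℕ → G → ℝ) : Prop :=
  (∀ j, IsAtomG (A j)) ∧ Summable (fun j => |lam j|) ∧
  Tendsto (fun N => eLpNorm (fun x => f x - ∑ j ∈ Finset.range N, lam j * A j x) 1 ρG)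
    atTop (nhds 0)

/-- The Hardy space `H¹`. -/
def MemH1 (f : G → ℝ) : Prop :=
  Integrable f ρG ∧ ∃ lam A, IsH1Decomp f lam A

/-- `‖f‖_{H¹} = inf Σ_j |lam_j|` over all atomic decompositions. -/
def H1norm (f : G → ℝ) : ℝ :=
  sInf {s | ∃ lam A, IsH1Decomp f lam A ∧ s = ∑' j, |lam j|}

/-- The left-invariant vector field `X₀ = a ∂_a`. -/
def X0 (f : G → ℝ) (x : G) : ℝ := x.2.2 * deriv (fun s => f (x.1, x.2.1, s)) x.2.2

/-- The left-invariant vector field `X₁ = a ∂_{x₁}`. -/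
def X1 (f : G → ℝ) (x : G) : ℝ := x.2.2 * deriv (fun s => f (s, x.2.1, x.2.2)) x.1

/-- The left-invariant vector field `X₂ = a ∂_{x₂}`. -/
def X2 (f : G → ℝ) (x : G) : ℝ := x.2.2 * deriv (fun s => f (x.1, s, x.2.2)) x.2.1

/-- `‖∇p_t(x)‖`, the Euclidean norm of `(X₀p_t, X₁p_t, X₂p_t)` at `x`. -/
def gradHeatNorm (t : ℝ) (x : G) : ℝ :=
  Real.sqrt (X0 (heatK t) x ^ 2 + X1 (heatK t) x ^ 2 + X2 (heatK t) x ^ 2)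

/-- The Poisson kernel `q_t(x) = π⁻² δ(x)^{1/2} (r(x)/sinh r(x)) · t/(t²+r(x)²)²`. -/
def poissonK (t : ℝ) (x : G) : ℝ :=
  (Real.pi ^ 2)⁻¹ * Real.sqrt (deltaG x) *
    (if rG x = 0 then 1 else rG x / Real.sinh (rG x)) *
    (t / (t ^ 2 + rG x ^ 2) ^ 2)

/-- Convolution `f ∗ q_t(x) = ∫ f(xy⁻¹) q_t(y) dρ(y)`. -/
def convPoisson (f : G → ℝ) (t : ℝ) (x : G) : ℝ := ∫ y, f (gMul x (gInv y)) * poissonK t y ∂ρG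

/-- The Poisson maximal operator `M̃f(x) = sup_{t>0} |f ∗ q_t(x)|`. -/
def maxPoisson (f : G → ℝ) (x : G) : ℝ≥0∞ :=
  ⨆ (t : ℝ) (_ : 0 < t), ENNReal.ofReal |convPoisson f t x|

/-- `G_{r₁}(x) = sup_{z ∈ B(x,r₁/2)} sup_{t>0} ‖∇p_t(z)‖`. -/
def Gsup (r1 : ℝ) (x : G) : ℝ≥0∞ :=
  ⨆ (z : G) (_ : 0 < z.2.2 ∧ dG x z < r1 / 2) (t : ℝ) (_ : 0 < t),
    ENNReal.ofReal (gradHeatNorm t z)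

/-- `R₀ = [−1,1]×[−1,1]×[e⁻¹,e]`. -/
def R0set : Set G :=
  Set.Icc (-1 : ℝ) 1 ×ˢ (Set.Icc (-1 : ℝ) 1 ×ˢ Set.Icc (Real.exp (-1)) (Real.exp 1))

/-- `R_L = [L−1,L+1]×[−1,1]×[e⁻¹,e]`. -/
def RLset (L : ℝ) : Set G :=
  Set.Icc (L - 1) (L + 1) ×ˢ (Set.Icc (-1 : ℝ) 1 ×ˢ Set.Icc (Real.exp (-1)) (Real.exp 1))

/-- `f_L = χ_{R_L} − χ_{R₀}`. -/
def fL (L : ℝ) : G → ℝ := fun x =>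
  (RLset L).indicator (fun _ => (1 : ℝ)) x - R0set.indicator (fun _ => (1 : ℝ)) x

/-- The mean of `g` over `R` with respect to `ρ`. -/
def czMean (g : G → ℝ) (R : Set G) : ℝ := (∫ x in R, g x ∂ρG) / (ρG R).toReal

/-- `‖g‖_{BMO} = sup_R ρ(R)⁻¹ ∫_R |g − g_R| dρ` over Calderón–Zygmund sets `R`. -/
def czBMO (g : G → ℝ) : ℝ≥0∞ :=
  ⨆ (R : Set G) (_ : IsCZ R),
    (ρG R)⁻¹ * ∫⁻ x in R, ENNReal.ofReal |g x - czMean g R| ∂ρG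

/-- `‖h‖_{BMO(ℝ)} = sup_Q |Q|⁻¹ ∫_Q |h − h_Q|` over bounded intervals `Q ⊂ ℝ`. -/
def lineBMO (h : ℝ → ℝ) : ℝ≥0∞ :=
  ⨆ (a : ℝ) (b : ℝ) (_ : a < b),
    (ENNReal.ofReal (b - a))⁻¹ *
      ∫⁻ s in Set.Icc a b, ENNReal.ofReal |h s - (∫ u in Set.Icc a b, h u) / (b - a)|

/-- `2R₀ = [−2,2]×[−2,2]×[e⁻²,e²]`. -/
def twoR0set : Set G :=
  Set.Icc (-2 : ℝ) 2 ×ˢ (Set.Icc (-2 : ℝ) 2 ×ˢ Set.Icc (Real.exp (-2)) (Real.exp 2))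

/-- The set `{x₁ > 3, |x₂| < 1, e⁻¹ < a < e}`. -/
def domSpecial : Set G :=
  {x : G | 3 < x.1 ∧ |x.2.1| < 1 ∧ Real.exp (-1) < x.2.2 ∧ x.2.2 < Real.exp 1}

/-- The function equal to `1/(x₁ (log x₁)^{3/2})` on `{x₁ > 3, |x₂| < 1, e⁻¹ < a < e}`,
to `c₀` on `R₀`, and `0` elsewhere. -/
def fSpecial (c0 : ℝ) : G → ℝ := fun x =>
  domSpecial.indicator (fun y => (y.1 * Real.log y.1 ^ ((3 : ℝ)/2))⁻¹) x
    + R0set.indicator (fun _ => c0) x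

lemma aux_sinh_ge {r : ℝ} (hr : 1 ≤ r) : Real.cosh r ≤ 2 * Real.sinh r := by
  have h1 : 2 ≤ Real.exp r := by linarith [Real.add_one_le_exp r]
  have h2 : Real.exp r * Real.exp (-r) = 1 := by rw [← Real.exp_add]; simp
  have h3 := Real.exp_pos (-r)
  rw [Real.cosh_eq, Real.sinh_eq]
  nlinarith

lemma aux_exp (v : ℝ) (hv : 0 ≤ v) :
    v ^ 3 * Real.exp (-(v ^ 2 / 4)) ≤ 33 ∧ v ^ 5 * Real.exp (-(v ^ 2 / 4)) ≤ 385 := by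
  have hw : 0 ≤ v ^ 2 / 4 := by positivity
  have h2 := Real.pow_div_factorial_le_exp _ hw 2
  have h3 := Real.pow_div_factorial_le_exp _ hw 3
  have h0 := Real.one_le_exp hw
  norm_num [Nat.factorial] at h2 h3
  have a1 : v ^ 3 ≤ 1 + v ^ 4 := by
    nlinarith [sq_nonneg (v - 1), sq_nonneg (v ^ 2 - v), sq_nonneg (v ^ 2 - 1)]
  have a2 : v ^ 5 ≤ 1 + v ^ 6 := by
    nlinarith [sq_nonneg (v ^ 3 - v ^ 2), sq_nonneg (v ^ 2 - 1), sq_nonneg (v ^ 3 - 1),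
      mul_nonneg hv (sq_nonneg (v ^ 2 - 1)), sq_nonneg (v ^ 3 - v), sq_nonneg v,
      sq_nonneg (v ^ 2 - v), sq_nonneg (v - 1)]
  rw [Real.exp_neg]
  have hE := Real.exp_pos (v ^ 2 / 4)
  constructor
  · rw [← div_eq_mul_inv, div_le_iff₀ hE]; nlinarith
  · rw [← div_eq_mul_inv, div_le_iff₀ hE]; nlinarith

lemma aux_rpow {t : ℝ} (ht : 0 < t) : t ^ (-(3 : ℝ)/2) = ((Real.sqrt t) ^ 3)⁻¹ := by
  rw [Real.sqrt_eq_rpow, ← Real.rpow_natCast, ← Real.rpow_mul ht.le, ← Real.rpow_neg ht.le]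
  norm_num

/-- The radial estimate. -/
lemma aux_radial {r t : ℝ} (hr : 1 ≤ r) (ht : 0 < t) :
    t ^ (-(3 : ℝ)/2) * Real.exp (-(r ^ 2) / (4 * t)) *
      (1 / Real.sinh r ^ 2 + r * Real.cosh r / Real.sinh r ^ 3
        + r ^ 2 / (2 * t * Real.sinh r ^ 2))
      ≤ 1166 / (r ^ 2 * Real.cosh r ^ 2) := by
  have hr0 : 0 < r := by linarith
  have hS := Real.sinh_pos_iff.2 hr0
  have hC := Real.cosh_pos r
  have hSC := aux_sinh_ge hr
  set S := Real.sinh r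
  set C := Real.cosh r
  obtain ⟨q, hq, rfl⟩ : ∃ q : ℝ, 0 < q ∧ t = q ^ 2 :=
    ⟨Real.sqrt t, Real.sqrt_pos.2 ht, (Real.sq_sqrt ht.le).symm⟩
  rw [aux_rpow ht, Real.sqrt_sq hq.le]
  obtain ⟨e1, e2⟩ := aux_exp (r / q) (by positivity)
  have hee : -(r ^ 2) / (4 * q ^ 2) = -((r / q) ^ 2 / 4) := by field_simp
  rw [hee]
  set v := r / q with hv
  have hv0 : 0 < v := by positivity
  have hqv : q = r / v := by rw [hv]; field_simp
  set E := Real.exp (-(v ^ 2 / 4))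
  have hE : 0 < E := Real.exp_pos _
  have b1 : 1 / S ≤ 2 / C := by
    rw [div_le_div_iff₀ hS hC]; linarith
  have b0 : 0 ≤ 1 / S := by positivity
  have b2 : (1 / S) ^ 2 ≤ (2 / C) ^ 2 := by gcongr
  have b3 : (1 / S) ^ 3 ≤ (2 / C) ^ 3 := by gcongr
  have key : 1 / S ^ 2 + r * C / S ^ 3 + r ^ 2 / (2 * q ^ 2 * S ^ 2)
      ≤ r * (12 + 2 * v ^ 2) / C ^ 2 := by
    have i1 : 1 / S ^ 2 + r * C / S ^ 3 + r ^ 2 / (2 * q ^ 2 * S ^ 2)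
        = (1 / S) ^ 2 + r * C * (1 / S) ^ 3 + v ^ 2 / 2 * (1 / S) ^ 2 := by
      rw [hv]; field_simp
    rw [i1]
    calc _ ≤ (2 / C) ^ 2 + r * C * (2 / C) ^ 3 + v ^ 2 / 2 * (2 / C) ^ 2 := by gcongr
      _ = (4 + 8 * r + 2 * v ^ 2) / C ^ 2 := by field_simp; ring
      _ ≤ _ := by
        gcongr
        nlinarith [sq_nonneg v]
  calc _ ≤ (q ^ 3)⁻¹ * E * (r * (12 + 2 * v ^ 2) / C ^ 2) := by gcongr
    _ = (12 * (v ^ 3 * E) + 2 * (v ^ 5 * E)) / (r ^ 2 * C ^ 2) := by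
      rw [hqv]; field_simp
    _ ≤ _ := by
      gcongr
      linarith

lemma aux_coshArg_ge (x : G) (ha : 0 < x.2.2) : 1 ≤ coshArg x := by
  have h : x.2.2 * x.2.2⁻¹ = 1 := mul_inv_cancel₀ ha.ne'
  have hi : 0 < x.2.2⁻¹ := inv_pos.2 ha
  have h3 : 0 ≤ x.2.2⁻¹ * (x.1 ^ 2 + x.2.1 ^ 2) := by positivity
  unfold coshArg
  nlinarith [sq_nonneg (x.2.2 - x.2.2⁻¹)]

lemma aux_rG (x : G) : rG x = Real.arcosh (coshArg x) := rfl

lemma aux_hasDeriv (y a t s : ℝ) (ha : 0 < a) (hr : 1 ≤ rG (s, y, a)) (ht : 0 < t) :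
    HasDerivAt (fun u => heatK t (u, y, a))
      ((8 * Real.pi ^ ((3 : ℝ)/2))⁻¹ * a⁻¹ * (t ^ (-(3 : ℝ)/2) *
        Real.exp (-(rG (s, y, a) ^ 2) / (4 * t)) *
        (1 / Real.sinh (rG (s, y, a)) ^ 2
          - rG (s, y, a) * Real.cosh (rG (s, y, a)) / Real.sinh (rG (s, y, a)) ^ 3
          - rG (s, y, a) ^ 2 / (2 * t * Real.sinh (rG (s, y, a)) ^ 2))) * (a⁻¹ * s)) s := by
  have hc1 : 1 ≤ coshArg (s, y, a) := aux_coshArg_ge _ ha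
  have hr0 : 0 < rG (s, y, a) := by linarith
  have hne : coshArg (s, y, a) ≠ 1 := by
    intro h
    rw [aux_rG, h, Real.arcosh_zero] at hr0
    exact lt_irrefl _ hr0
  have hlt : 1 < coshArg (s, y, a) := lt_of_le_of_ne hc1 hne.symm
  have hS := Real.sinh_pos_iff.2 hr0
  have dc : HasDerivAt (fun u => coshArg (u, y, a)) (a⁻¹ * s) s := by
    unfold coshArg
    have := (((((hasDerivAt_id s).pow 2).add_const (y ^ 2)).const_mul a⁻¹).const_add
      (a + a⁻¹)).div_const 2
    refine this.congr_deriv ?_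
    simp
    ring
  have dr : HasDerivAt (fun u => rG (u, y, a)) ((Real.sinh (rG (s, y, a)))⁻¹ * (a⁻¹ * s)) s := by
    have h := (Real.hasDerivAt_arcosh (x := coshArg (s, y, a)) hlt).comp s dc
    rw [← Real.sinh_arcosh hc1] at h
    exact h
  set r := rG (s, y, a) with hrdef
  have dF : HasDerivAt (fun ρ : ℝ => (8 * Real.pi ^ ((3 : ℝ)/2))⁻¹ * a⁻¹ *
      (ρ / Real.sinh ρ) * t ^ (-(3 : ℝ)/2) * Real.exp (-(ρ ^ 2) / (4 * t)))
      ((8 * Real.pi ^ ((3 : ℝ)/2))⁻¹ * a⁻¹ * ((1 * Real.sinh r - r * Real.cosh r) /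
        Real.sinh r ^ 2) * t ^ (-(3 : ℝ)/2) * Real.exp (-(r ^ 2) / (4 * t)) +
        (8 * Real.pi ^ ((3 : ℝ)/2))⁻¹ * a⁻¹ * (r / Real.sinh r) * t ^ (-(3 : ℝ)/2) *
        (Real.exp (-(r ^ 2) / (4 * t)) * (-(2 * r) / (4 * t)))) r := by
    have d1 := ((hasDerivAt_id r).div (Real.hasDerivAt_sinh r) hS.ne')
    have d2 : HasDerivAt (fun ρ : ℝ => -(ρ ^ 2) / (4 * t)) (-(2 * r) / (4 * t)) r := by
      refine ((((hasDerivAt_id r).pow 2).neg).div_const (4 * t)).congr_deriv ?_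
      simp
    exact ((d1.const_mul _).mul_const _).mul d2.exp
  have dG' := dF.comp s dr
  have hev : (fun u => heatK t (u, y, a)) =ᶠ[nhds s]
      ((fun ρ : ℝ => (8 * Real.pi ^ ((3 : ℝ)/2))⁻¹ * a⁻¹ *
      (ρ / Real.sinh ρ) * t ^ (-(3 : ℝ)/2) * Real.exp (-(ρ ^ 2) / (4 * t))) ∘
      (fun u => rG (u, y, a))) := by
    have hn : ∀ᶠ u in nhds s, rG (u, y, a) ≠ 0 :=
      dr.continuousAt.eventually_ne hr0.ne'
    filter_upwards [hn] with u hu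
    have hd : Real.sqrt (deltaG (u, y, a)) = a⁻¹ := by
      simp only [deltaG]
      rw [Real.sqrt_inv, Real.sqrt_sq ha.le]
    simp only [heatK, Function.comp, if_neg hu, hd]
  refine (dG'.congr_of_eventuallyEq hev).congr_deriv ?_
  generalize t ^ (-(3 : ℝ)/2) = T
  generalize (8 * Real.pi ^ ((3 : ℝ)/2))⁻¹ = K
  generalize Real.exp (-(r ^ 2) / (4 * t)) = E
  have hS' := hS.ne'
  field_simp
  ring

lemma aux_X1 (x : G) (ha : 0 < x.2.2) (hr : 1 ≤ rG x) (t : ℝ) (ht : 0 < t) :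
    |X1 (heatK t) x| ≤ ((8 * Real.pi ^ ((3 : ℝ)/2))⁻¹ * 1166) * normG x /
      (x.2.2 * rG x ^ 2 * Real.cosh (rG x) ^ 2) := by
  obtain ⟨s, y, a⟩ := x
  simp only at ha
  have hd := aux_hasDeriv y a t s ha hr ht
  have hrad := aux_radial hr ht
  simp only [X1]
  rw [hd.deriv]
  set r := rG (s, y, a) with hrdef
  have hr0 : 0 < r := by linarith
  have hS := Real.sinh_pos_iff.2 hr0
  have hC := Real.cosh_pos r
  have hT : 0 < t ^ (-(3 : ℝ)/2) := Real.rpow_pos_of_pos ht _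
  have hK : 0 < (8 * Real.pi ^ ((3 : ℝ)/2))⁻¹ := by positivity
  have hE := Real.exp_pos (-(r ^ 2) / (4 * t))
  generalize t ^ (-(3 : ℝ)/2) = T at *
  generalize (8 * Real.pi ^ ((3 : ℝ)/2))⁻¹ = K at *
  generalize Real.exp (-(r ^ 2) / (4 * t)) = E at *
  have hs : |s| ≤ normG (s, y, a) := by
    simp only [normG]
    rw [← Real.sqrt_sq_eq_abs]
    exact Real.sqrt_le_sqrt (by nlinarith [sq_nonneg y])
  have p1 : 0 ≤ 1 / Real.sinh r ^ 2 := by positivity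
  have p2 : 0 ≤ r * Real.cosh r / Real.sinh r ^ 3 := by positivity
  have p3 : 0 ≤ r ^ 2 / (2 * t * Real.sinh r ^ 2) := by positivity
  set A := 1 / Real.sinh r ^ 2
  set B := r * Real.cosh r / Real.sinh r ^ 3
  set D := r ^ 2 / (2 * t * Real.sinh r ^ 2)
  have habs : |A - B - D| ≤ A + B + D := by
    rw [abs_le]; constructor <;> linarith
  have e : a * (K * a⁻¹ * (T * E * (A - B - D)) * (a⁻¹ * s))
      = K * (T * E * (A - B - D)) * a⁻¹ * s := by field_simp
  rw [e, abs_mul, abs_mul, abs_mul, abs_mul, abs_of_pos hK, abs_of_pos (mul_pos hT hE),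
    abs_of_pos (inv_pos.2 ha)]
  calc K * (T * E * |A - B - D|) * a⁻¹ * |s|
      ≤ K * (T * E * (A + B + D)) * a⁻¹ * normG (s, y, a) := by gcongr
    _ ≤ K * (1166 / (r ^ 2 * Real.cosh r ^ 2)) * a⁻¹ * normG (s, y, a) := by
      have : 0 ≤ normG (s, y, a) := Real.sqrt_nonneg _
      gcongr
    _ = _ := by field_simp

lemma aux_cosh_swap (u v a : ℝ) : coshArg (u, v, a) = coshArg (v, u, a) := by
  simp only [coshArg]; ring

lemma aux_r_swap (u v a : ℝ) : rG (u, v, a) = rG (v, u, a) := by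
  simp only [rG, aux_cosh_swap u v a]

lemma aux_heat_swap (t u v a : ℝ) : heatK t (u, v, a) = heatK t (v, u, a) := by
  simp only [heatK, aux_r_swap u v a, deltaG]

lemma aux_X2 (x : G) (ha : 0 < x.2.2) (hr : 1 ≤ rG x) (t : ℝ) (ht : 0 < t) :
    |X2 (heatK t) x| ≤ ((8 * Real.pi ^ ((3 : ℝ)/2))⁻¹ * 1166) * normG x /
      (x.2.2 * rG x ^ 2 * Real.cosh (rG x) ^ 2) := by
  obtain ⟨u, v, a⟩ := x
  have h := aux_X1 (v, u, a) ha (by rw [aux_r_swap]; exact hr) t ht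
  have hX : X2 (heatK t) (u, v, a) = X1 (heatK t) (v, u, a) := by
    simp only [X1, X2, aux_heat_swap t u]
  have hN : normG (u, v, a) = normG (v, u, a) := by
    simp only [normG, add_comm]
  rw [hX, hN, aux_r_swap u v a]
  exact h

theorem sup_X12_heatK_large :
    ∃ C > (0 : ℝ), ∀ x : G, 0 < x.2.2 → 1 ≤ rG x → ∀ t > (0 : ℝ),
      |X1 (heatK t) x| ≤ C * normG x / (x.2.2 * rG x ^ 2 * Real.cosh (rG x) ^ 2) ∧
      |X2 (heatK t) x| ≤ C * normG x / (x.2.2 * rG x ^ 2 * Real.cosh (rG x) ^ 2) := by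
  refine ⟨(8 * Real.pi ^ ((3 : ℝ)/2))⁻¹ * 1166, by positivity, fun x ha hr t ht =>
    ⟨aux_X1 x ha hr t ht, aux_X2 x ha hr t ht⟩⟩
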